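/- arXiv:math/0606015 — 2 statements merged into one kernel-verified Lean document; each statement's English description precedes it below -/
import Mathlib

section
/- Let b : [0,∞) → ℝ be continuously differentiable with b(t) ≥ 0, b(t) ≤ C₁(1+t)^{−1} and |b'(t)| ≤ C₂(1+t)^{−2} for all t ≥ 0, and assume that either limsup_{t→∞} t·b(t) < 1/2 or liminf_{t→∞} t·b(t) > 1/2. Set λ(t) = exp(∫₀^t b(τ)dτ). Fix Λ > 0, let E(t,0) be the fundamental solution of the dissipative system and E₀(t) = [[cos(Λt), sin(Λt)], [−sin(Λt), cos(Λt)]]. Then the limit W := lim_{t→∞} λ(t)·E₀(−t)·E(t,0) exists in the 2×2 complex matrices and W is invertible. -/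
open MeasureTheory Filter

/-- The auxiliary function `λ(t) = exp(∫₀^t b)`. -/
noncomputable def lam (b : ℝ → ℝ) (t : ℝ) : ℝ := Real.exp (∫ τ in (0:ℝ)..t, b τ)

/-- The coefficient matrix `[[0, Λ], [−Λ, −2b(t)]]` of the dissipative system. -/
noncomputable def sysMat (Λ : ℝ) (b : ℝ → ℝ) (t : ℝ) : Matrix (Fin 2) (Fin 2) ℂ :=
  !![0, (Λ : ℂ); (-Λ : ℂ), ((-2 * b t : ℝ) : ℂ)]

/-- The fundamental solution `E₀(t)` of the free system. -/
noncomputable def freeMat (Λ t : ℝ) : Matrix (Fin 2) (Fin 2) ℂ :=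
  !![(Real.cos (Λ * t) : ℂ), (Real.sin (Λ * t) : ℂ);
     (-(Real.sin (Λ * t)) : ℝ), (Real.cos (Λ * t) : ℂ)]

open Topology in
lemma aux_levinson (V V' : ℝ → ℂ × ℂ) (K : ℝ) (hK : 0 < K)
    (hV : ∀ t ≥ (0:ℝ), HasDerivAt V (V' t) t)
    (hV' : ∀ t ≥ (0:ℝ), ‖V' t‖ ≤ K / (1 + t) ^ 2 * ‖V t‖) :
    ∃ w, Tendsto V atTop (nhds w) := by
  have hd : ∀ c : ℝ, ∀ t ≥ (0:ℝ), HasDerivAt (fun t : ℝ => c - c / (1 + t)) (c / (1 + t) ^ 2) t := by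
    intro c t ht
    have h1 : (1 + t) ≠ 0 := by positivity
    have := (((hasDerivAt_id t).const_add 1).fun_inv h1).const_mul c |>.const_sub c
    refine HasDerivAt.congr_deriv this ?_ 
    simp only [id]; field_simp
  set B : ℝ → ℝ := fun t => (‖V 0‖ + 1) * Real.exp (2 * K - 2 * K / (1 + t)) with hB
  have hBpos : ∀ t, 0 < B t := fun t => by positivity
  have hBd : ∀ t ≥ (0:ℝ), HasDerivAt B (B t * (2 * K / (1 + t) ^ 2)) t := by
    intro t ht
    refine HasDerivAt.congr_deriv ((hd (2 * K) t ht).exp.const_mul (‖V 0‖ + 1)) ?_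
    simp only [hB]; ring
  have hbound : ∀ t ≥ (0:ℝ), ‖V t‖ ≤ B t := by
    intro t ht
    refine image_norm_le_of_norm_deriv_right_lt_deriv_boundary' (a := 0) (b := t) (f' := V')
      (B' := fun t => B t * (2 * K / (1 + t) ^ 2))
      (fun x hx => (hV x hx.1).continuousAt.continuousWithinAt)
      (fun x hx => (hV x hx.1).hasDerivWithinAt) ?_
      (fun x hx => (hBd x hx.1).continuousAt.continuousWithinAt)
      (fun x hx => (hBd x hx.1).hasDerivWithinAt) ?_ ⟨ht, le_rfl⟩
    · simp [hB]
    · intro x hx hx2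
      have h1 := hV' x hx.1
      rw [hx2] at h1
      have hx0 : 0 ≤ x := hx.1
      have h3 : 0 < K / (1 + x) ^ 2 * B x := mul_pos (by positivity) (hBpos x)
      have : B x * (2 * K / (1 + x) ^ 2) = 2 * (K / (1 + x) ^ 2 * B x) := by ring
      linarith
  set M := (‖V 0‖ + 1) * Real.exp (2 * K) with hM
  have hbM : ∀ t ≥ (0:ℝ), ‖V t‖ ≤ M := by
    intro t ht
    refine (hbound t ht).trans ?_
    simp only [hB, hM]
    gcongr
    have : 0 ≤ 2 * K / (1 + t) := by positivity
    linarith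
  have hMp : 0 ≤ M := by positivity
  have hI : IntegrableOn (fun t : ℝ => (K * M) / (1 + t) ^ 2) (Set.Ioi 0) := by
    refine integrableOn_Ioi_deriv_of_nonneg' (l := K * M - 0) (fun x hx => hd (K * M) x hx) ?_ ?_
    · intro x hx; positivity
    · refine tendsto_const_nhds.sub ?_
      exact (tendsto_atTop_add_const_left atTop (1:ℝ) tendsto_id).const_div_atTop (K * M)
  refine ⟨_, tendsto_limUnder_of_hasDerivAt_of_integrableOn_Ioi (a := 0) (f' := deriv V)
    (fun x hx => (hV x (le_of_lt hx)).differentiableAt.hasDerivAt) ?_⟩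
  refine Integrable.mono' hI (aestronglyMeasurable_deriv _ _) ?_
  filter_upwards [self_mem_ae_restrict measurableSet_Ioi] with x hx
  have hx0 : (0:ℝ) ≤ x := le_of_lt hx
  rw [(hV x hx0).deriv]
  refine (hV' x hx0).trans ?_
  calc K / (1 + x) ^ 2 * ‖V x‖ ≤ K / (1 + x) ^ 2 * M := by gcongr; exact hbM x hx0
    _ = _ := by ring

lemma aux_lam (b : ℝ → ℝ) (hb : ∀ t ≥ (0:ℝ), ContinuousAt b t) :
    ∃ L : ℝ → ℝ, L 0 = 1 ∧ (∀ t ≥ (0:ℝ), L t = lam b t) ∧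
      ∀ t ≥ (0:ℝ), HasDerivAt L (b t * L t) t := by
  have hc : Continuous (fun t : ℝ => b (max t 0)) := by
    rw [continuous_iff_continuousAt]
    intro t
    exact ContinuousAt.comp (f := fun t : ℝ => max t 0) (hb _ (le_max_right _ _)) (by fun_prop)
  refine ⟨fun t => Real.exp (∫ τ in (0:ℝ)..t, b (max τ 0)), by simp, ?_, ?_⟩
  · intro t ht
    simp only [lam]
    congr 1
    apply intervalIntegral.integral_congr
    intro x hx
    rw [Set.uIcc_of_le ht] at hx
    simp [hx.1]
  · intro t ht
    have := (hc.integral_hasStrictDerivAt 0 t).hasDerivAt.exp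
    refine this.congr_deriv ?_
    simp only [max_eq_left ht]; ring

lemma aux_column (b b' : ℝ → ℝ) (C₁ C₂ : ℝ)
    (hb' : ∀ t ≥ (0:ℝ), HasDerivAt b (b' t) t)
    (hb0 : ∀ t ≥ (0:ℝ), 0 ≤ b t)
    (hb1 : ∀ t ≥ (0:ℝ), b t ≤ C₁ / (1 + t))
    (hb2 : ∀ t ≥ (0:ℝ), |b' t| ≤ C₂ / (1 + t) ^ 2)
    (Λ : ℝ) (hΛ : 0 < Λ) (L : ℝ → ℝ)
    (hL : ∀ t ≥ (0:ℝ), HasDerivAt L (b t * L t) t)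
    (x y : ℝ → ℂ)
    (hx : ∀ t ≥ (0:ℝ), HasDerivAt x (Λ * y t) t)
    (hy : ∀ t ≥ (0:ℝ), HasDerivAt y (-Λ * x t - 2 * b t * y t) t) :
    ∃ w₁ w₂ : ℂ,
      Tendsto (fun t => (L t : ℂ) * (Real.cos (Λ * t) * x t - Real.sin (Λ * t) * y t))
        atTop (nhds w₁) ∧
      Tendsto (fun t => (L t : ℂ) * (Real.sin (Λ * t) * x t + Real.cos (Λ * t) * y t))
        atTop (nhds w₂) := by
  have hΛc : (Λ : ℂ) ≠ 0 := by exact_mod_cast hΛ.ne'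
  set X : ℝ → ℂ := fun t => L t * x t with hX
  set Z : ℝ → ℂ := fun t => L t * y t + b t / Λ * (L t * x t) with hZ
  set q : ℝ → ℝ := fun t => b' t + b t ^ 2 with hq
  have dX : ∀ t ≥ (0:ℝ), HasDerivAt X (Λ * Z t) t := by
    intro t ht
    refine ((hL t ht).ofReal_comp.fun_mul (hx t ht)).congr_deriv ?_
    simp only [hZ]; push_cast; field_simp; ring
  have dZ : ∀ t ≥ (0:ℝ), HasDerivAt Z (-Λ * X t + q t / Λ * X t) t := by
    intro t ht
    refine (((hL t ht).ofReal_comp.fun_mul (hy t ht)).fun_add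
      (((hb' t ht).ofReal_comp.div_const (Λ:ℂ)).fun_mul (dX t ht))).congr_deriv ?_
    simp only [hZ, hX, hq]; push_cast; field_simp; ring
  have dc : ∀ t : ℝ, HasDerivAt (fun t : ℝ => ((Real.cos (Λ * t) : ℝ) : ℂ)) 
      (-(Λ * Real.sin (Λ * t) : ℂ)) t := by
    intro t
    have := ((((hasDerivAt_id t).const_mul Λ).cos).ofReal_comp)
    refine this.congr_deriv ?_
    simp only [id]; push_cast; ring
  have ds : ∀ t : ℝ, HasDerivAt (fun t : ℝ => ((Real.sin (Λ * t) : ℝ) : ℂ)) 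
      (Λ * Real.cos (Λ * t) : ℂ) t := by
    intro t
    have := ((((hasDerivAt_id t).const_mul Λ).sin).ofReal_comp)
    refine this.congr_deriv ?_
    simp only [id]; push_cast; ring
  set V : ℝ → ℂ × ℂ := fun t =>
    (Real.cos (Λ * t) * X t - Real.sin (Λ * t) * Z t,
      Real.sin (Λ * t) * X t + Real.cos (Λ * t) * Z t) with hV
  set V' : ℝ → ℂ × ℂ := fun t =>
    (-Real.sin (Λ * t) * (q t / Λ * X t), Real.cos (Λ * t) * (q t / Λ * X t)) with hV'
  have dV : ∀ t ≥ (0:ℝ), HasDerivAt V (V' t) t := by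
    intro t ht
    refine HasDerivAt.prodMk ?_ ?_
    · refine (((dc t).fun_mul (dX t ht)).fun_sub ((ds t).fun_mul (dZ t ht))).congr_deriv ?_
      ring
    · refine (((ds t).fun_mul (dX t ht)).fun_add ((dc t).fun_mul (dZ t ht))).congr_deriv ?_
      ring
  have ncos : ∀ t : ℝ, ‖((Real.cos (Λ * t) : ℝ) : ℂ)‖ ≤ 1 := fun t => by
    rw [Complex.norm_real]; exact Real.abs_cos_le_one _
  have nsin : ∀ t : ℝ, ‖((Real.sin (Λ * t) : ℝ) : ℂ)‖ ≤ 1 := fun t => by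
    rw [Complex.norm_real]; exact Real.abs_sin_le_one _
  have hXV : ∀ t, ‖X t‖ ≤ 2 * ‖V t‖ := by
    intro t
    have h : X t = Real.cos (Λ * t) * (V t).1 + Real.sin (Λ * t) * (V t).2 := by
      have h1 : ((Real.sin (Λ * t) : ℝ) : ℂ) ^ 2 + ((Real.cos (Λ * t) : ℝ) : ℂ) ^ 2 = 1 := by
        exact_mod_cast Real.sin_sq_add_cos_sq (Λ * t)
      simp only [hV]
      linear_combination (- X t) * h1
    rw [h]
    refine (norm_add_le _ _).trans ?_
    rw [norm_mul, norm_mul]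
    have h1 := mul_le_mul (ncos t) (norm_fst_le (V t)) (norm_nonneg _) zero_le_one
    have h2 := mul_le_mul (nsin t) (norm_snd_le (V t)) (norm_nonneg _) zero_le_one
    linarith
  have hqb : ∀ t ≥ (0:ℝ), |q t| ≤ (C₂ + C₁ ^ 2) / (1 + t) ^ 2 := by
    intro t ht
    have h1 := pow_le_pow_left₀ (hb0 t ht) (hb1 t ht) 2
    calc |q t| ≤ |b' t| + |b t ^ 2| := abs_add_le _ _
      _ ≤ C₂ / (1 + t) ^ 2 + (C₁ / (1 + t)) ^ 2 := by
        rw [abs_of_nonneg (sq_nonneg (b t))]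
        exact add_le_add (hb2 t ht) h1
      _ = _ := by rw [div_pow]; ring
  have hC2 : 0 ≤ C₂ := by
    have := (abs_nonneg _).trans (hb2 0 le_rfl)
    simpa using this
  set K := 2 * (C₂ + C₁ ^ 2) / Λ + 1 with hK
  have hKp : 0 < K := by positivity
  obtain ⟨w, hw⟩ := aux_levinson V V' K hKp dV (by
    intro t ht
    have key : ‖(q t / Λ * X t : ℂ)‖ ≤ K / (1 + t) ^ 2 * ‖V t‖ := by
      rw [norm_mul, norm_div, Complex.norm_real, Complex.norm_real, Real.norm_eq_abs,
        Real.norm_eq_abs, abs_of_pos hΛ]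
      calc |q t| / Λ * ‖X t‖ ≤ ((C₂ + C₁ ^ 2) / (1 + t) ^ 2) / Λ * (2 * ‖V t‖) := by
            gcongr
            · exact hqb t ht
            · exact hXV t
        _ = (2 * (C₂ + C₁ ^ 2) / Λ) / (1 + t) ^ 2 * ‖V t‖ := by ring
        _ ≤ _ := by gcongr; linarith
    rw [Prod.norm_def]
    refine max_le ?_ ?_
    · simp only [hV', norm_mul, norm_neg]
      rw [← norm_mul]
      have := mul_le_mul (nsin t) key (norm_nonneg _) zero_le_one
      linarith
    · simp only [hV', norm_mul]
      rw [← norm_mul]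
      have := mul_le_mul (ncos t) key (norm_nonneg _) zero_le_one
      linarith)
  have hbt : Tendsto b atTop (nhds 0) := by
    refine squeeze_zero' (g := fun t => C₁ / (1 + t)) ?_ ?_ ?_
    · filter_upwards [eventually_ge_atTop 0] with t ht using hb0 t ht
    · filter_upwards [eventually_ge_atTop 0] with t ht using hb1 t ht
    · exact (tendsto_atTop_add_const_left atTop (1:ℝ) tendsto_id).const_div_atTop C₁
  have hbX : Tendsto (fun t => (b t / Λ * X t : ℂ)) atTop (nhds 0) := by
    refine squeeze_zero_norm' (a := fun t => b t / Λ * (2 * ‖V t‖)) ?_ ?_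
    · filter_upwards [eventually_ge_atTop 0] with t ht
      rw [norm_mul, norm_div, Complex.norm_real, Complex.norm_real, Real.norm_eq_abs,
        Real.norm_eq_abs, abs_of_pos hΛ, abs_of_nonneg (hb0 t ht)]
      have := hb0 t ht
      gcongr
      exact hXV t
    · have := (hbt.div_const Λ).mul (hw.norm.const_mul 2)
      simpa using this
  have hbXn : Tendsto (fun t => ‖(b t / Λ * X t : ℂ)‖) atTop (nhds 0) := by
    simpa using hbX.norm
  have h1 : Tendsto (fun t => (Real.sin (Λ * t) * (b t / Λ * X t) : ℂ)) atTop (nhds 0) := by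
    refine squeeze_zero_norm (fun t => ?_) hbXn
    rw [norm_mul]
    exact mul_le_of_le_one_left (norm_nonneg _) (nsin t)
  have h2 : Tendsto (fun t => (Real.cos (Λ * t) * (b t / Λ * X t) : ℂ)) atTop (nhds 0) := by
    refine squeeze_zero_norm (fun t => ?_) hbXn
    rw [norm_mul]
    exact mul_le_of_le_one_left (norm_nonneg _) (ncos t)
  refine ⟨w.1 + 0, w.2 - 0, ?_, ?_⟩
  · refine (((continuous_fst.tendsto w).comp hw).add h1).congr (fun t => ?_)
    simp only [hV, hX, hZ, Function.comp]; ring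
  · refine (((continuous_snd.tendsto w).comp hw).sub h2).congr (fun t => ?_)
    simp only [hV, hX, hZ, Function.comp]; ring

/-- The fixed-frequency symbol of the modified inverse wave
operator: under the dichotomy `limsup t·b(t) < 1/2` or `liminf t·b(t) > 1/2`,
the limit `W = lim_{t→∞} λ(t)·E₀(−t)·E(t,0)` exists and is invertible. -/
theorem modified_wave_operator_symbol
    (b b' : ℝ → ℝ) (C₁ C₂ : ℝ)
    (hb' : ∀ t ≥ (0:ℝ), HasDerivAt b (b' t) t)
    (hb'c : ContinuousOn b' (Set.Ici 0))
    (hb0 : ∀ t ≥ (0:ℝ), 0 ≤ b t)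
    (hb1 : ∀ t ≥ (0:ℝ), b t ≤ C₁ / (1 + t))
    (hb2 : ∀ t ≥ (0:ℝ), |b' t| ≤ C₂ / (1 + t) ^ 2)
    (hdich : (∃ μ < (1/2 : ℝ), ∀ᶠ t in atTop, t * b t ≤ μ) ∨
             (∃ μ > (1/2 : ℝ), ∀ᶠ t in atTop, μ ≤ t * b t))
    (Λ : ℝ) (hΛ : 0 < Λ)
    (E : ℝ → Matrix (Fin 2) (Fin 2) ℂ)
    (hE0 : E 0 = 1)
    (hE : ∀ t ≥ (0:ℝ), ∀ i j : Fin 2,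
      HasDerivAt (fun τ => E τ i j) ((sysMat Λ b t * E t) i j) t) :
    ∃ W : Matrix (Fin 2) (Fin 2) ℂ,
      Tendsto (fun t => ((lam b t : ℝ) : ℂ) • (freeMat Λ (-t) * E t)) atTop (nhds W) ∧
      IsUnit W := by
  obtain ⟨L, hL0, hLlam, hL⟩ := aux_lam b (fun t ht => (hb' t ht).continuousAt)
  have hx : ∀ j, ∀ t ≥ (0:ℝ), HasDerivAt (fun τ => E τ 0 j) (Λ * E t 1 j) t := by
    intro j t ht
    refine (hE t ht 0 j).congr_deriv ?_
    simp [sysMat, Matrix.mul_apply, Fin.sum_univ_two]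
  have hy : ∀ j, ∀ t ≥ (0:ℝ),
      HasDerivAt (fun τ => E τ 1 j) (-Λ * E t 0 j - 2 * b t * E t 1 j) t := by
    intro j t ht
    refine (hE t ht 1 j).congr_deriv ?_
    simp [sysMat, Matrix.mul_apply, Fin.sum_univ_two]
    ring
  have hcol := fun j => aux_column b b' C₁ C₂ hb' hb0 hb1 hb2 Λ hΛ L hL
    (fun τ => E τ 0 j) (fun τ => E τ 1 j) (hx j) (hy j)
  choose w₁ w₂ hw₁ hw₂ using hcol
  have hlim : Tendsto (fun t => ((lam b t : ℝ) : ℂ) • (freeMat Λ (-t) * E t)) atTop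
      (nhds (Matrix.of ![w₁, w₂])) := by
    refine tendsto_pi_nhds.2 fun i => tendsto_pi_nhds.2 fun j => ?_
    fin_cases i
    · refine (hw₁ j).congr' ?_
      filter_upwards [eventually_ge_atTop 0] with t ht
      rw [hLlam t ht]
      simp [freeMat, Matrix.vecMul, dotProduct, Fin.sum_univ_two]
      left; ring
    · refine (hw₂ j).congr' ?_
      filter_upwards [eventually_ge_atTop 0] with t ht
      rw [hLlam t ht]
      simp [freeMat, Matrix.vecMul, dotProduct, Fin.sum_univ_two]
  refine ⟨_, hlim, ?_⟩
  set D : ℝ → ℂ := fun t => (L t : ℂ) ^ 2 * (E t 0 0 * E t 1 1 - E t 0 1 * E t 1 0) with hD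
  have dD : ∀ t ≥ (0:ℝ), HasDerivAt D 0 t := by
    intro t ht
    refine (((hL t ht).ofReal_comp.fun_pow 2).fun_mul
      (((hx 0 t ht).fun_mul (hy 1 t ht)).fun_sub
        ((hx 1 t ht).fun_mul (hy 0 t ht)))).congr_deriv ?_
    push_cast
    ring
  have hD1 : ∀ t ≥ (0:ℝ), D t = 1 := by
    intro t ht
    have := constant_of_has_deriv_right_zero (f := D) (a := 0) (b := t)
      (fun x hx => (dD x hx.1).continuousAt.continuousWithinAt)
      (fun x hx => (dD x hx.1).hasDerivWithinAt) t ⟨ht, le_rfl⟩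
    rw [this]
    simp [hD, hL0, hE0]
  have hdet : Tendsto (fun t => (((lam b t : ℝ) : ℂ) • (freeMat Λ (-t) * E t)).det) atTop
      (nhds (Matrix.of ![w₁, w₂]).det) :=
    ((Continuous.matrix_det continuous_id).tendsto (Matrix.of ![w₁, w₂])).comp hlim
  have hone : (Matrix.of ![w₁, w₂]).det = 1 := by
    refine tendsto_nhds_unique hdet ?_
    refine tendsto_const_nhds.congr' ?_
    filter_upwards [eventually_ge_atTop 0] with t ht
    rw [← hD1 t ht, ← hLlam t ht, Matrix.det_smul, Matrix.det_mul]
    have h2 : (freeMat Λ (-t)).det = 1 := by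
      rw [Matrix.det_fin_two]
      simp [freeMat]
      linear_combination Complex.sin_sq_add_cos_sq ((Λ : ℂ) * t)
    rw [h2, Matrix.det_fin_two]
    simp [hD]
  rw [Matrix.isUnit_iff_isUnit_det, hone]
  exact isUnit_one
end

section
/- Let b : [0,∞) → ℝ be continuously differentiable with b(t) ≥ 0, b(t) ≤ C₁(1+t)^{−1} and |b'(t)| ≤ C₂(1+t)^{−2} for all t ≥ 0, and assume that either limsup_{t→∞} t·b(t) < 1/2 or liminf_{t→∞} t·b(t) > 1/2. Set λ(t) = exp(∫₀^t b(τ)dτ). Fix Λ > 0 and let u : [0,∞) → ℂ be a twice continuously differentiable solution of u''(t) + 2b(t)u'(t) + Λ²u(t) = 0 with (u(0), u'(0)) ≠ (0,0). Then there exist constants c, C > 0 (depending on b, Λ and the data) such that for all t ≥ 0: c/λ(t) ≤ √(Λ²|u(t)|² + |u'(t)|²) ≤ C/λ(t). -/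
open MeasureTheory Filter

theorem energy_aux_core (b b' L E p q r : ℝ → ℝ) (C₁ C₂ Λ : ℝ) (hΛ : 0 < Λ)
    (hb' : ∀ t ≥ (0:ℝ), HasDerivAt b (b' t) t)
    (hb0 : ∀ t ≥ (0:ℝ), 0 ≤ b t)
    (hb1 : ∀ t ≥ (0:ℝ), b t ≤ C₁ / (1 + t))
    (hb2 : ∀ t ≥ (0:ℝ), |b' t| ≤ C₂ / (1 + t) ^ 2)
    (hL : ∀ t ≥ (0:ℝ), HasDerivAt L (b t) t)
    (hEqr : ∀ t, E t = q t + r t) (hr : ∀ t, 0 ≤ r t)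
    (hpE : ∀ t, 2 * Λ * |p t| ≤ E t)
    (hE : ∀ t ≥ (0:ℝ), HasDerivAt E (-4 * b t * q t) t)
    (hp : ∀ t ≥ (0:ℝ), HasDerivAt p (q t - 2 * b t * p t - r t) t)
    (hE0 : 0 < E 0) :
    ∃ c C : ℝ, 0 < c ∧ 0 < C ∧ ∀ t ≥ (0:ℝ),
      c ≤ Real.exp (2 * L t) * E t ∧ Real.exp (2 * L t) * E t ≤ C := by
  -- positivity of the energy
  have hEpos : ∀ t ≥ (0:ℝ), 0 < E t := by
    have hd : ∀ t ≥ (0:ℝ), HasDerivAt (fun t => Real.exp (4 * L t) * E t)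
        (Real.exp (4 * L t) * (4 * b t) * E t + Real.exp (4 * L t) * (-4 * b t * q t)) t :=
      fun t ht => (((hL t ht).const_mul 4).exp).mul (hE t ht)
    have hm : MonotoneOn (fun t => Real.exp (4 * L t) * E t) (Set.Ici 0) := by
      apply monotoneOn_of_hasDerivWithinAt_nonneg (convex_Ici 0)
        (fun t ht => (hd t ht).continuousAt.continuousWithinAt)
        (fun t ht => (hd t (interior_subset ht)).hasDerivWithinAt)
      intro t ht
      have ht := interior_subset ht
      rw [hEqr t]
      have : 0 ≤ Real.exp (4 * L t) * (b t * r t) :=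
        mul_nonneg (Real.exp_pos _).le (mul_nonneg (hb0 t ht) (hr t))
      nlinarith
    intro t ht
    have h := hm (Set.mem_Ici.2 le_rfl) (Set.mem_Ici.2 ht) ht
    simp only at h
    exact pos_of_mul_pos_right (lt_of_lt_of_le (mul_pos (Real.exp_pos _) hE0) h) (Real.exp_pos _).le
  -- choose T with b ≤ Λ/2 beyond T
  obtain ⟨T, hT0, hT⟩ : ∃ T ≥ (0:ℝ), ∀ t ≥ T, b t ≤ Λ / 2 := by
    refine ⟨2 * |C₁| / Λ, by positivity, fun t ht => ?_⟩
    have ht0 : 0 ≤ t := le_trans (by positivity) ht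
    refine (hb1 t ht0).trans ?_
    rw [div_le_iff₀ (by linarith)]
    rw [ge_iff_le, div_le_iff₀ hΛ] at ht
    nlinarith [le_abs_self C₁]
  set F : ℝ → ℝ := fun t => Real.exp (2 * L t) * (E t + 2 * b t * p t) with hF
  have hFd : ∀ t ≥ (0:ℝ), HasDerivAt F (Real.exp (2 * L t) * (2 * b' t * p t)) t := by
    intro t ht
    have h := (((hL t ht).const_mul 2).exp).mul
      ((hE t ht).add ((((hb' t ht).const_mul 2)).mul (hp t ht)))
    refine h.congr_deriv ?_
    simp only [Pi.add_apply, Pi.mul_apply, hEqr t]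
    ring
  set K := 2 * C₂ / Λ with hK
  have hFlow : ∀ t ≥ T, Real.exp (2 * L t) * E t ≤ 2 * F t ∧ F t ≤ 2 * (Real.exp (2 * L t) * E t) := by
    intro t ht
    have h1 := hT t ht
    have h0 := hb0 t (hT0.trans ht)
    have h2 : |2 * b t * p t| ≤ E t / 2 := by
      rw [abs_mul, abs_of_nonneg (by linarith : 0 ≤ 2 * b t)]
      nlinarith [hpE t, abs_nonneg (p t)]
    have h3 := abs_le.1 h2
    have h4 := hEpos t (hT0.trans ht)
    have h5 := Real.exp_pos (2 * L t)
    simp only [hF]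
    constructor <;> nlinarith
  have hFpos : ∀ t ≥ T, 0 < F t := fun t ht => by
    have := (hFlow t ht).1
    have h2 := mul_pos (Real.exp_pos (2 * L t)) (hEpos t (hT0.trans ht))
    linarith
  have hFd' : ∀ t ≥ T, |Real.exp (2 * L t) * (2 * b' t * p t)| ≤ K / (1 + t) ^ 2 * F t := by
    intro t ht
    have ht0 : 0 ≤ t := hT0.trans ht
    have h1 := hb2 t ht0
    have h2 : 2 * |p t| ≤ E t / Λ := by
      rw [le_div_iff₀ hΛ]; linarith [hpE t]
    have h3 := (hFlow t ht).1
    have h4 := hEpos t ht0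
    have h6 : 0 ≤ C₂ / (1 + t) ^ 2 := (abs_nonneg _).trans h1
    rw [abs_mul, abs_of_pos (Real.exp_pos _), abs_mul, abs_mul, abs_two]
    calc Real.exp (2 * L t) * (2 * |b' t| * |p t|)
        = Real.exp (2 * L t) * (|b' t| * (2 * |p t|)) := by ring
      _ ≤ Real.exp (2 * L t) * (C₂ / (1 + t) ^ 2 * (E t / Λ)) := by gcongr
      _ = C₂ / (1 + t) ^ 2 / Λ * (Real.exp (2 * L t) * E t) := by ring
      _ ≤ C₂ / (1 + t) ^ 2 / Λ * (2 * F t) := by gcongr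
      _ = _ := by rw [hK]; ring
  have hg : ∀ (s : ℝ), ∀ t ≥ (0:ℝ), HasDerivAt (fun t => Real.exp (s * (1 + t)⁻¹) * F t)
      (Real.exp (s * (1 + t)⁻¹) *
        (Real.exp (2 * L t) * (2 * b' t * p t) - s / (1 + t) ^ 2 * F t)) t := by
    intro s t ht
    have h1 : HasDerivAt (fun t : ℝ => (1 + t)⁻¹) (-1 / (1 + t) ^ 2) t :=
      ((hasDerivAt_id t).const_add 1).inv (by simp only [id]; positivity)
    refine (((h1.const_mul s).exp).mul (hFd t ht)).congr_deriv ?_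
    ring
  have hanti : AntitoneOn (fun t => Real.exp (K * (1 + t)⁻¹) * F t) (Set.Ici T) := by
    apply antitoneOn_of_hasDerivWithinAt_nonpos (convex_Ici T)
      (fun t ht => (hg K t (hT0.trans ht)).continuousAt.continuousWithinAt)
      (fun t ht => (hg K t (hT0.trans (interior_subset ht : t ∈ Set.Ici T))).hasDerivWithinAt)
    intro t ht
    have h := (abs_le.1 (hFd' t (interior_subset ht))).2
    exact mul_nonpos_of_nonneg_of_nonpos (Real.exp_pos _).le (by linarith)
  have hmono : MonotoneOn (fun t => Real.exp ((-K) * (1 + t)⁻¹) * F t) (Set.Ici T) := by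
    apply monotoneOn_of_hasDerivWithinAt_nonneg (convex_Ici T)
      (fun t ht => (hg (-K) t (hT0.trans ht)).continuousAt.continuousWithinAt)
      (fun t ht => (hg (-K) t (hT0.trans (interior_subset ht : t ∈ Set.Ici T))).hasDerivWithinAt)
    intro t ht
    have h := (abs_le.1 (hFd' t (interior_subset ht))).1
    exact mul_nonneg (Real.exp_pos _).le (by rw [neg_div]; linarith)
  have hC₂ : 0 ≤ C₂ := by
    have := (abs_nonneg _).trans (hb2 0 le_rfl); simpa using this
  have hK0 : 0 ≤ K := by positivity
  -- compact part
  have hcont : ContinuousOn (fun t => Real.exp (2 * L t) * E t) (Set.Icc 0 T) := fun t ht =>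
    ((((hL t ht.1).const_mul 2).exp).mul (hE t ht.1)).continuousAt.continuousWithinAt
  have hne : (Set.Icc (0:ℝ) T).Nonempty := ⟨0, le_rfl, hT0⟩
  obtain ⟨t₁, ht₁, hmin⟩ := isCompact_Icc.exists_isMinOn hne hcont
  obtain ⟨t₂, ht₂, hmax⟩ := isCompact_Icc.exists_isMaxOn hne hcont
  have hWpos : ∀ t ≥ (0:ℝ), 0 < Real.exp (2 * L t) * E t := fun t ht =>
    mul_pos (Real.exp_pos _) (hEpos t ht)
  have hmin' : ∀ t ∈ Set.Icc 0 T, Real.exp (2 * L t₁) * E t₁ ≤ Real.exp (2 * L t) * E t :=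
    fun t ht => hmin ht
  have hmax' : ∀ t ∈ Set.Icc 0 T, Real.exp (2 * L t) * E t ≤ Real.exp (2 * L t₂) * E t₂ :=
    fun t ht => hmax ht
  have hFT := hFpos T le_rfl
  refine ⟨min (Real.exp (2 * L t₁) * E t₁) (Real.exp ((-K) * (1 + T)⁻¹) * F T / 2),
    max (Real.exp (2 * L t₂) * E t₂) (2 * (Real.exp (K * (1 + T)⁻¹) * F T)),
    lt_min (hWpos _ ht₁.1) (by positivity), lt_max_of_lt_left (hWpos _ ht₂.1), fun t ht => ?_⟩
  rcases le_total t T with h | h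
  · exact ⟨(min_le_left _ _).trans (hmin' t ⟨ht, h⟩), (hmax' t ⟨ht, h⟩).trans (le_max_left _ _)⟩
  · have ha := hanti (Set.mem_Ici.2 le_rfl) (Set.mem_Ici.2 h) h
    have hm := hmono (Set.mem_Ici.2 le_rfl) (Set.mem_Ici.2 h) h
    simp only at ha hm
    have hFt := hFpos t h
    have hb := hFlow t h
    have hinv : 0 ≤ (1 + t)⁻¹ := by positivity
    have e1 : 1 ≤ Real.exp (K * (1 + t)⁻¹) := Real.one_le_exp (by positivity)
    have e2 : Real.exp ((-K) * (1 + t)⁻¹) ≤ 1 := Real.exp_le_one_iff.2 (by nlinarith)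
    constructor
    · refine (min_le_right _ _).trans ?_
      nlinarith
    · refine le_trans ?_ (le_max_right _ _)
      nlinarith

/-- Two-sided energy estimate at a fixed frequency `Λ > 0`:
under the dichotomy `limsup t·b(t) < 1/2` or `liminf t·b(t) > 1/2`, every
nontrivial solution of `u'' + 2b(t)u' + Λ²u = 0` satisfies
`c/λ(t) ≤ √(Λ²|u(t)|² + |u'(t)|²) ≤ C/λ(t)`. -/
theorem two_sided_energy_decay_fixed_frequency
    (b b' : ℝ → ℝ) (C₁ C₂ : ℝ)
    (hb' : ∀ t ≥ (0:ℝ), HasDerivAt b (b' t) t)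
    (hb'c : ContinuousOn b' (Set.Ici 0))
    (hb0 : ∀ t ≥ (0:ℝ), 0 ≤ b t)
    (hb1 : ∀ t ≥ (0:ℝ), b t ≤ C₁ / (1 + t))
    (hb2 : ∀ t ≥ (0:ℝ), |b' t| ≤ C₂ / (1 + t) ^ 2)
    (hdich : (∃ μ < (1/2 : ℝ), ∀ᶠ t in atTop, t * b t ≤ μ) ∨
             (∃ μ > (1/2 : ℝ), ∀ᶠ t in atTop, μ ≤ t * b t))
    (Λ : ℝ) (hΛ : 0 < Λ)
    (u u' u'' : ℝ → ℂ)
    (hu : ∀ t ≥ (0:ℝ), HasDerivAt u (u' t) t)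
    (hu' : ∀ t ≥ (0:ℝ), HasDerivAt u' (u'' t) t)
    (hu'' : ContinuousOn u'' (Set.Ici 0))
    (heq : ∀ t ≥ (0:ℝ), u'' t + 2 * (b t : ℂ) * u' t + (Λ : ℂ) ^ 2 * u t = 0)
    (hdata : ¬(u 0 = 0 ∧ u' 0 = 0)) :
    ∃ c C : ℝ, 0 < c ∧ 0 < C ∧ ∀ t ≥ (0:ℝ),
      c / lam b t ≤ Real.sqrt (Λ ^ 2 * ‖u t‖ ^ 2 + ‖u' t‖ ^ 2) ∧
      Real.sqrt (Λ ^ 2 * ‖u t‖ ^ 2 + ‖u' t‖ ^ 2) ≤ C / lam b t := by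
  set B : ℝ → ℝ := fun t => b (max t 0) with hB
  have hBc : Continuous B := by
    rw [continuous_iff_continuousAt]
    intro t
    exact ContinuousAt.comp (f := fun t : ℝ => max t 0) (g := b)
      (hb' _ (le_max_right t 0)).continuousAt (by fun_prop)
  have hL : ∀ t ≥ (0:ℝ), HasDerivAt (fun t => ∫ τ in (0:ℝ)..t, B τ) (b t) t := by
    intro t ht
    have h := intervalIntegral.integral_hasDerivAt_right (hBc.intervalIntegrable 0 t)
      (hBc.stronglyMeasurableAtFilter _ _) hBc.continuousAt
    simpa [hB, max_eq_left ht] using h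
  have hlam : ∀ t ≥ (0:ℝ), lam b t = Real.exp (∫ τ in (0:ℝ)..t, B τ) := by
    intro t ht
    unfold lam
    congr 1
    apply intervalIntegral.integral_congr
    intro s hs
    rw [Set.uIcc_of_le ht] at hs
    simp [hB, max_eq_left hs.1]
  have re1 : ∀ (f : ℝ → ℂ) (f' : ℂ) (t : ℝ), HasDerivAt f f' t →
      HasDerivAt (fun t => (f t).re) f'.re t := fun f f' t h =>
    Complex.reCLM.hasFDerivAt.comp_hasDerivAt t h
  have im1 : ∀ (f : ℝ → ℂ) (f' : ℂ) (t : ℝ), HasDerivAt f f' t →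
      HasDerivAt (fun t => (f t).im) f'.im t := fun f f' t h =>
    Complex.imCLM.hasFDerivAt.comp_hasDerivAt t h
  have nsq : ∀ z : ℂ, ‖z‖ ^ 2 = z.re ^ 2 + z.im ^ 2 := fun z => by
    rw [Complex.sq_norm, Complex.normSq_apply]; ring
  have eqre : ∀ t ≥ (0:ℝ), (u'' t).re = - 2 * b t * (u' t).re - Λ ^ 2 * (u t).re := by
    intro t ht
    have h := congrArg Complex.re (heq t ht)
    simp [← Complex.ofReal_pow] at h
    linarith
  have eqim : ∀ t ≥ (0:ℝ), (u'' t).im = - 2 * b t * (u' t).im - Λ ^ 2 * (u t).im := by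
    intro t ht
    have h := congrArg Complex.im (heq t ht)
    simp [← Complex.ofReal_pow] at h
    linarith
  obtain ⟨c, C, hc, hC, hcC⟩ := energy_aux_core b b' (fun t => ∫ τ in (0:ℝ)..t, B τ)
    (fun t => Λ ^ 2 * ((u t).re ^ 2 + (u t).im ^ 2) + ((u' t).re ^ 2 + (u' t).im ^ 2))
    (fun t => (u t).re * (u' t).re + (u t).im * (u' t).im)
    (fun t => (u' t).re ^ 2 + (u' t).im ^ 2)
    (fun t => Λ ^ 2 * ((u t).re ^ 2 + (u t).im ^ 2)) C₁ C₂ Λ hΛ hb' hb0 hb1 hb2 hL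
    (fun t => by ring) (fun t => by positivity)
    (fun t => by
      have : 2 * Λ * |(u t).re * (u' t).re + (u t).im * (u' t).im|
          = |2 * Λ * ((u t).re * (u' t).re + (u t).im * (u' t).im)| := by
        rw [abs_mul, abs_of_pos (by positivity : 0 < 2 * Λ)]
      rw [this, abs_le]
      constructor
      · nlinarith [sq_nonneg (Λ * (u t).re + (u' t).re), sq_nonneg (Λ * (u t).im + (u' t).im)]
      · nlinarith [sq_nonneg (Λ * (u t).re - (u' t).re), sq_nonneg (Λ * (u t).im - (u' t).im)])
    (fun t ht => by
      refine (((((re1 _ _ _ (hu t ht)).pow 2).add ((im1 _ _ _ (hu t ht)).pow 2)).const_mul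
        (Λ ^ 2)).add (((re1 _ _ _ (hu' t ht)).pow 2).add
          ((im1 _ _ _ (hu' t ht)).pow 2))).congr_deriv ?_
      rw [eqre t ht, eqim t ht]
      push_cast
      ring)
    (fun t ht => by
      refine (((re1 _ _ _ (hu t ht)).mul (re1 _ _ _ (hu' t ht))).add
        ((im1 _ _ _ (hu t ht)).mul (im1 _ _ _ (hu' t ht)))).congr_deriv ?_
      rw [eqre t ht, eqim t ht]
      ring)
    (by
      simp only [← nsq]
      by_cases h : u 0 = 0
      · have h2 : u' 0 ≠ 0 := fun h2 => hdata ⟨h, h2⟩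
        have := norm_pos_iff.2 h2
        positivity
      · have := norm_pos_iff.2 h
        positivity)
  refine ⟨Real.sqrt c, Real.sqrt C, Real.sqrt_pos.2 hc, Real.sqrt_pos.2 hC, fun t ht => ?_⟩
  have h := hcC t ht
  simp only [← nsq] at h
  have hl : Real.exp (2 * ∫ τ in (0:ℝ)..t, B τ) = lam b t ^ 2 := by
    rw [hlam t ht, ← Real.exp_nat_mul]; norm_num
  have hpos : 0 < lam b t := by rw [hlam t ht]; exact Real.exp_pos _
  rw [hl] at h
  have hs : Real.sqrt (lam b t ^ 2 * (Λ ^ 2 * ‖u t‖ ^ 2 + ‖u' t‖ ^ 2))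
      = lam b t * Real.sqrt (Λ ^ 2 * ‖u t‖ ^ 2 + ‖u' t‖ ^ 2) := by
    rw [Real.sqrt_mul (by positivity), Real.sqrt_sq hpos.le]
  rw [div_le_iff₀ hpos, le_div_iff₀ hpos, mul_comm _ (lam b t), ← hs]
  exact ⟨Real.sqrt_le_sqrt h.1, Real.sqrt_le_sqrt h.2⟩
end
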